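/- arXiv:1710.08953 — 8 statements merged into one kernel-verified Lean document; each statement's English description precedes it below -/
import Mathlib

section
/- If a knapsack instance I (items A, nonnegative real sizes s_j for j in A, nonnegative real capacity c) has an equivalent simple graph, then I satisfies property P(I): for every subset A' of A, if s_j + s_{j'} ≤ c for all distinct j, j' in A', then the total size of A' is at most c. -/
/-- A set of vertices is independent in `G` if no two of its vertices are adjacent. -/
def SimpleGraph.IsIndep {V : Type*} (G : SimpleGraph V) (S : Set V) : Prop :=
  S.Pairwise fun u v => ¬ G.Adj u v

/-- if a knapsack instance (items `ι`, nonnegative sizes `s`, nonnegative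
capacity `c`) has an equivalent simple graph, then it satisfies property `P(I)`. -/
theorem knapsack_equivalent_graph_implies_propertyP
    {ι : Type} [Fintype ι] (s : ι → ℝ) (c : ℝ)
    (hs : ∀ j, 0 ≤ s j) (hc : 0 ≤ c)
    (hequiv : ∃ (W : Type) (G : SimpleGraph W) (f : ι ≃ W),
      ∀ A' : Finset ι, ((∑ j ∈ A', s j) ≤ c ↔ G.IsIndep (f '' (↑A' : Set ι)))) :
    ∀ A' : Finset ι,
      (∀ j ∈ A', ∀ j' ∈ A', j ≠ j' → s j + s j' ≤ c) → (∑ j ∈ A', s j) ≤ c := by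
  classical
  obtain ⟨W, G, f, h⟩ := hequiv
  intro A' hA
  rw [h]
  rintro _ ⟨j, hj, rfl⟩ _ ⟨j', hj', rfl⟩ hne
  have hjj : j ≠ j' := fun e => hne (congrArg f e)
  have h2 : (∑ k ∈ ({j, j'} : Finset ι), s k) ≤ c := by
    rw [Finset.sum_pair hjj]
    exact hA j hj j' hj' hjj
  exact (h _).1 h2 ⟨j, by simp, rfl⟩ ⟨j', by simp, rfl⟩ hne
end

section
/- For every finite split graph G with at least one vertex, the number of maximal independent sets of G is either ω(G) or ω(G)+1, where ω(G) is the clique number of G. -/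
/-- A split graph: the vertex set can be partitioned into a clique and an
independent set (either part may be empty). -/
def SimpleGraph.IsSplit {V : Type*} (G : SimpleGraph V) : Prop :=
  ∃ K : Set V, G.IsClique K ∧ G.IsIndep Kᶜ

/-- The number of maximal independent sets of `G`. -/
noncomputable def numMaximalIndep {V : Type} [Fintype V] (G : SimpleGraph V) : ℕ :=
  {S : Set V | Maximal G.IsIndep S}.ncard

open SimpleGraph in
theorem exists_max_split {V : Type} [Fintype V] (G : SimpleGraph V) (hG : G.IsSplit) :
    ∃ K : Set V, G.IsClique K ∧ G.IsIndep Kᶜ ∧ K.ncard = G.cliqueNum := by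
  classical
  obtain ⟨K, hK, hI⟩ := hG
  obtain ⟨Q, hQ⟩ := G.exists_isNClique_cliqueNum
  have hle : K.ncard ≤ G.cliqueNum := by
    have h : G.IsClique (K.toFinset : Set V) := by simpa using hK
    have := h.card_le_cliqueNum
    rwa [Set.ncard_eq_toFinset_card']
  rcases hle.eq_or_lt with h | h
  · exact ⟨K, hK, hI, h⟩
  have h1 : ((Q : Set V) \ K).ncard ≤ 1 := by
    rw [Set.ncard_le_one]
    intro a ha b hb
    by_contra hab
    exact hI ha.2 hb.2 hab (hQ.1 ha.1 hb.1 hab)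
  have h2 : ((Q : Set V) ∩ K).ncard + ((Q : Set V) \ K).ncard = G.cliqueNum := by
    rw [Set.ncard_inter_add_ncard_diff_eq_ncard, Set.ncard_coe_finset, hQ.2]
  have h3 : (Q : Set V) ∩ K = K :=
    Set.eq_of_subset_of_ncard_le Set.inter_subset_right (by omega)
  have h4 : K ⊆ Q := Set.inter_eq_right.1 h3
  refine ⟨Q, hQ.1, hI.mono (Set.compl_subset_compl.2 h4), ?_⟩
  rw [Set.ncard_coe_finset, hQ.2]

/-- a finite split graph with at least one vertex has either `ω(G)`
or `ω(G) + 1` maximal independent sets. -/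
theorem split_graph_numMaximalIndep_eq_cliqueNum_or_succ
    {V : Type} [Fintype V] [Nonempty V] (G : SimpleGraph V) (hG : G.IsSplit) :
    numMaximalIndep G = G.cliqueNum ∨ numMaximalIndep G = G.cliqueNum + 1 := by
  obtain ⟨K, hK, hI, hc⟩ := exists_max_split G hG
  rw [← hc]
  unfold numMaximalIndep
  let S : V → Set V := fun v => {u | u = v ∨ (u ∉ K ∧ ¬ G.Adj v u)}
  have hSind : ∀ v ∈ K, G.IsIndep (S v) := by
    intro v hv a ha b hb hab
    rcases ha with rfl | ha <;> rcases hb with rfl | hb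
    · exact absurd rfl hab
    · exact hb.2
    · exact fun h => ha.2 h.symm
    · exact hI ha.1 hb.1 hab
  have hsub : ∀ v ∈ K, ∀ T, G.IsIndep T → v ∈ T → T ⊆ S v := by
    intro v hv T hT hvT u hu
    by_cases huv : u = v
    · exact Or.inl huv
    · have hn := hT hvT hu (Ne.symm huv)
      exact Or.inr ⟨fun huK => hn (hK hv huK (Ne.symm huv)), hn⟩
  have hSmax : ∀ v ∈ K, Maximal G.IsIndep (S v) := fun v hv =>
    ⟨hSind v hv, fun T hT hle => hsub v hv T hT (hle (Or.inl rfl))⟩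
  have hinj : Set.InjOn S K := by
    intro a ha b hb hab
    have : a ∈ S b := hab ▸ (Or.inl rfl : a ∈ S a)
    rcases this with h | h
    · exact h
    · exact absurd ha h.1
  have hcard : (S '' K).ncard = K.ncard := Set.ncard_image_of_injOn hinj
  have hnot : Kᶜ ∉ S '' K := by
    rintro ⟨v, hv, h⟩
    have : v ∈ Kᶜ := h ▸ (Or.inl rfl : v ∈ S v)
    exact this hv
  have hall : ∀ T, Maximal G.IsIndep T → T = Kᶜ ∨ T ∈ S '' K := by
    intro T hT
    by_cases h : ∃ v ∈ K, v ∈ T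
    · obtain ⟨v, hv, hvT⟩ := h
      exact Or.inr ⟨v, hv, (hT.eq_of_le (hSind v hv) (hsub v hv T hT.1 hvT)).symm⟩
    · left
      exact hT.eq_of_le hI (fun u hu huK => h ⟨u, huK, hu⟩)
  by_cases hm : Maximal G.IsIndep Kᶜ
  · right
    have : {T : Set V | Maximal G.IsIndep T} = insert Kᶜ (S '' K) := by
      ext T
      constructor
      · exact hall T
      · rintro (rfl | ⟨v, hv, rfl⟩)
        · exact hm
        · exact hSmax v hv
    rw [this, Set.ncard_insert_of_notMem hnot (Set.toFinite _), hcard]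
  · left
    have : {T : Set V | Maximal G.IsIndep T} = S '' K := by
      ext T
      constructor
      · intro hT
        rcases hall T hT with rfl | h
        · exact absurd hT hm
        · exact h
      · rintro ⟨v, hv, rfl⟩
        exact hSmax v hv
    rw [this, hcard]
end

section
/- For every finite threshold graph G with at least one vertex, the number of maximal independent sets of G is exactly ω(G), the clique number of G. -/
/-- A threshold graph: there are nonnegative vertex weights and a nonnegative
threshold `T` such that a set of vertices is independent iff its total weight
is at most `T`. -/
def SimpleGraph.IsThreshold {V : Type} [Fintype V] (G : SimpleGraph V) : Prop :=
  ∃ (w : V → ℝ) (T : ℝ), (∀ v, 0 ≤ w v) ∧ 0 ≤ T ∧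
    ∀ U : Finset V, ((∑ v ∈ U, w v) ≤ T ↔ G.IsIndep (↑U : Set V))

/-- a finite threshold graph with at least one vertex has exactly
`ω(G)` maximal independent sets. -/
theorem threshold_graph_numMaximalIndep_eq_cliqueNum
    {V : Type} [Fintype V] [Nonempty V] (G : SimpleGraph V) (hG : G.IsThreshold) :
    numMaximalIndep G = G.cliqueNum := by
  classical
  obtain ⟨w, T, hw, hT, h⟩ := hG
  have adj : ∀ u v, u ≠ v → (¬ G.Adj u v ↔ w u + w v ≤ T) := by
    intro u v huv
    have h1 := h {u, v}
    rw [Finset.sum_pair huv] at h1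
    rw [h1]
    unfold SimpleGraph.IsIndep
    simp only [Finset.coe_insert, Finset.coe_singleton]
    rw [Set.pairwise_pair]
    constructor
    · intro h2 _
      exact ⟨h2, fun h3 => h2 h3.symm⟩
    · intro h2
      exact (h2 huv).1
  have fin : {S : Set V | Maximal G.IsIndep S}.Finite := Set.toFinite _
  have add : ∀ S : Set V, Maximal G.IsIndep S → ∀ u, (∀ s ∈ S, u ≠ s → w u + w s ≤ T) → u ∈ S := by
    intro S hS u hu
    have h1 : G.IsIndep (insert u S) := by
      unfold SimpleGraph.IsIndep
      rw [Set.pairwise_insert]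
      refine ⟨hS.1, fun b hb hub => ?_⟩
      have := (adj u b hub).2 (hu b hb hub)
      exact ⟨this, fun h3 => this h3.symm⟩
    exact hS.2 h1 (Set.subset_insert u S) (Set.mem_insert u S)
  have ex : ∀ S : Set V, ∃ m, Maximal G.IsIndep S → m ∈ S ∧ ∀ s ∈ S, w s ≤ w m := by
    intro S
    by_cases hS : Maximal G.IsIndep S
    · have hne : S.Nonempty := by
        by_contra hne
        rw [Set.not_nonempty_iff_eq_empty] at hne
        obtain ⟨v⟩ := ‹Nonempty V›
        have := add S hS v (by simp [hne])
        simp [hne] at this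
      obtain ⟨m, hm, hm'⟩ := Set.exists_max_image S w (Set.toFinite _) hne
      exact ⟨m, fun _ => ⟨hm, hm'⟩⟩
    · exact ⟨Classical.arbitrary V, fun h => absurd h hS⟩
  choose m hm using ex
  have key : ∀ S S' : Set V, Maximal G.IsIndep S → Maximal G.IsIndep S' → w (m S) ≤ w (m S') →
      ¬ G.Adj (m S) (m S') → S = S' := by
    intro S S' hS hS' hle hn
    obtain ⟨h1, h2⟩ := hm S hS
    obtain ⟨h3, h4⟩ := hm S' hS'
    by_cases he : m S = m S'
    · refine hS.eq_of_subset hS'.1 fun s hs => ?_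
      by_cases hsm : s = m S
      · rw [hsm, he]; exact h3
      apply add S' hS'
      intro t ht _
      have := (adj s (m S) hsm).1 (hS.1 hs h1 hsm)
      have := h4 t ht
      rw [he] at *
      linarith
    · have h5 := (adj _ _ he).1 hn
      refine hS.eq_of_subset hS'.1 fun s hs => ?_
      apply add S' hS'
      intro t ht _
      have := h4 t ht
      have := h2 s hs
      linarith
  have key' : ∀ S S' : Set V, Maximal G.IsIndep S → Maximal G.IsIndep S' → 
      ¬ G.Adj (m S) (m S') → S = S' := by
    intro S S' hS hS' hn
    rcases le_total (w (m S)) (w (m S')) with hl | hl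
    · exact key S S' hS hS' hl hn
    · exact (key S' S hS' hS hl (fun h => hn h.symm)).symm
  unfold numMaximalIndep
  apply le_antisymm
  · have hinj : Set.InjOn m {S : Set V | Maximal G.IsIndep S} := by
      intro S hS S' hS' he
      exact key' S S' hS hS' (by rw [he]; exact G.irrefl)
    rw [← Set.ncard_image_of_injOn hinj, Set.ncard_eq_toFinset_card']
    apply SimpleGraph.IsClique.card_le_cliqueNum
    rw [Set.coe_toFinset]
    rintro _ ⟨S, hS, rfl⟩ _ ⟨S', hS', rfl⟩ hne
    by_contra hn
    exact hne (by rw [key' S S' hS hS' hn])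
  · obtain ⟨K, hK⟩ := G.exists_isNClique_cliqueNum
    rw [← hK.card_eq, ← Set.ncard_coe_finset]
    have ex2 : ∀ k : V, ∃ S : Set V, k ∈ S ∧ Maximal G.IsIndep S := by
      intro k
      obtain ⟨S, h1, h2⟩ := (Set.toFinite {S : Set V | G.IsIndep S}).exists_le_maximal
        (a := {k}) (Set.pairwise_singleton _ _)
      exact ⟨S, h1 rfl, h2⟩
    choose f hf hf' using ex2
    apply Set.ncard_le_ncard_of_injOn f (fun k _ => hf' k) _ fin
    intro a ha b hb hab
    by_contra hne
    have hb' := hf b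
    rw [← hab] at hb'
    exact (hf' a).1 (hf a) hb' hne (hK.isClique ha hb hne)
end

section
/- Let G be a finite threshold graph with at least one vertex whose maximum vertex degree is at most d. Then the number of maximal independent sets of G is at most d+1. -/
/-- a finite threshold graph with at least one vertex and maximum
degree at most `d` has at most `d + 1` maximal independent sets. -/
theorem threshold_graph_max_degree_numMaximalIndep_le
    {V : Type} [Fintype V] [Nonempty V] (G : SimpleGraph V) [DecidableRel G.Adj]
    (hG : G.IsThreshold) (d : ℕ) (hdeg : ∀ v, G.degree v ≤ d) :
    numMaximalIndep G ≤ d + 1 := by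
  classical
  obtain ⟨w, T, hw, hT, h⟩ := hG
  have adj : ∀ u v, u ≠ v → (G.Adj u v ↔ T < w u + w v) := by
    intro u v huv
    have h1 := h {u, v}
    rw [Finset.sum_pair huv] at h1
    have h2 : G.IsIndep (↑({u, v} : Finset V) : Set V) ↔ ¬ G.Adj u v := by
      unfold SimpleGraph.IsIndep
      rw [Finset.coe_pair, Set.pairwise_pair]
      constructor
      · intro k
        exact (k huv).1
      · intro k _
        exact ⟨k, fun q => k q.symm⟩
    rw [h2] at h1
    rw [← not_le, h1, not_not]
  obtain ⟨m, hm⟩ := Finite.exists_max w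
  have hC : ∀ u v, G.Adj u v → u ∈ insert m (G.neighborFinset m) := by
    intro u v huv
    rw [Finset.mem_insert, SimpleGraph.mem_neighborFinset]
    by_cases hu : u = m
    · exact Or.inl hu
    · right
      rw [adj m u (Ne.symm hu)]
      have := (adj u v huv.ne).1 huv
      linarith [hm v]
  have key : ∀ S : Set V, Maximal G.IsIndep S → ∃ v, v ∈ insert m (G.neighborFinset m) ∧ v ∈ S ∧
      ∀ x ∈ S, x ∈ insert m (G.neighborFinset m) → w x ≤ w v := by
    intro S hS
    have hne : ((insert m (G.neighborFinset m)).filter (· ∈ S)).Nonempty := by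
      by_contra hemp
      rw [Finset.not_nonempty_iff_eq_empty, Finset.filter_eq_empty_iff] at hemp
      have hmS : m ∉ S := hemp (Finset.mem_insert_self _ _)
      have hind : G.IsIndep (insert m S) := by
        have h0 : S.Pairwise fun u v => ¬ G.Adj u v := hS.prop
        refine h0.insert ?_
        intro b hb _
        have : ¬ G.Adj m b := fun q => hemp
          (Finset.mem_insert_of_mem ((G.mem_neighborFinset m b).2 q)) hb
        exact ⟨this, fun q => this q.symm⟩
      exact hmS (hS.le_of_ge hind (Set.subset_insert _ _) (Set.mem_insert _ _))
    obtain ⟨v, hv, hmax⟩ := Finset.exists_max_image _ w hne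
    rw [Finset.mem_filter] at hv
    exact ⟨v, hv.1, hv.2, fun x hx hx' => hmax x (Finset.mem_filter.2 ⟨hx', hx⟩)⟩
  choose! f hf1 hf2 hf3 using key
  have aux : ∀ S S' : Set V, Maximal G.IsIndep S → Maximal G.IsIndep S' → f S = f S' →
      ∀ x ∈ S, ∀ y ∈ S', ¬ G.Adj x y := by
    intro S S' hS hS' e x hx y hy hxy
    have hS'i : S'.Pairwise fun u v => ¬ G.Adj u v := hS'.prop
    have hxv := hf3 S hS x hx (hC x y hxy)
    rw [e] at hxv
    have hT' := (adj x y hxy.ne).1 hxy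
    have hvS' := hf2 S' hS'
    by_cases hyv : f S' = y
    · have hSi : S.Pairwise fun u v => ¬ G.Adj u v := hS.prop
      have : y ∈ S := by rw [← hyv, ← e]; exact hf2 S hS
      exact hSi hx this hxy.ne hxy
    · exact hS'i hvS' hy hyv ((adj _ _ hyv).2 (by linarith))
  have sub : ∀ S S' : Set V, Maximal G.IsIndep S → Maximal G.IsIndep S' → f S = f S' → S' ⊆ S := by
    intro S S' hS hS' e
    have hind : G.IsIndep (S ∪ S') := by
      rintro x (hx | hx) y (hy | hy) hxy
      · exact hS.prop hx hy hxy
      · exact aux S S' hS hS' e x hx y hy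
      · exact aux S' S hS' hS e.symm x hx y hy
      · exact hS'.prop hx hy hxy
    exact Set.subset_union_right.trans (hS.le_of_ge hind Set.subset_union_left)
  have hle : numMaximalIndep G ≤ (↑(insert m (G.neighborFinset m)) : Set V).ncard := by
    unfold numMaximalIndep
    refine Set.ncard_le_ncard_of_injOn f (fun S hS => hf1 S hS) ?_ (Set.toFinite _)
    intro S hS S' hS' e
    exact (sub S' S hS' hS e.symm).antisymm (sub S S' hS hS' e)
  rw [Set.ncard_coe_finset] at hle
  refine hle.trans ((Finset.card_insert_le _ _).trans ?_)
  rw [SimpleGraph.card_neighborFinset_eq_degree]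
  exact Nat.succ_le_succ (hdeg m)
end

section
/- For every finite threshold graph G with at least one vertex, the number of maximum independent sets of G (independent sets of largest cardinality) is at most ω(G), the clique number of G. -/
/-- A maximum independent set of `G`: an independent set of largest cardinality. -/
def SimpleGraph.IsMaximumIndep {V : Type} [Fintype V] (G : SimpleGraph V) (S : Set V) : Prop :=
  G.IsIndep S ∧ ∀ T : Set V, G.IsIndep T → T.ncard ≤ S.ncard

/-- a finite threshold graph with at least one vertex has at most
`ω(G)` maximum independent sets. -/
theorem threshold_graph_numMaximumIndep_le_cliqueNum
    {V : Type} [Fintype V] [Nonempty V] (G : SimpleGraph V) (hG : G.IsThreshold) :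
    {S : Set V | G.IsMaximumIndep S}.ncard ≤ G.cliqueNum := by
  classical
  obtain ⟨w, T, hw, hT, hU⟩ := hG
  have hadj : ∀ u v, u ≠ v → (w u + w v ≤ T ↔ ¬ G.Adj u v) := by
    intro u v huv
    rw [← Finset.sum_pair huv, hU]
    constructor
    · intro h
      exact h (by simp) (by simp) huv
    · intro h a ha b hb hab
      simp only [Finset.coe_insert, Finset.coe_singleton, Set.mem_insert_iff,
        Set.mem_singleton_iff] at ha hb
      rcases ha with rfl | rfl <;> rcases hb with rfl | rfl
      · exact absurd rfl hab
      · exact h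
      · exact fun h' => h h'.symm
      · exact absurd rfl hab
  have hmax : ∀ S : Set V, G.IsMaximumIndep S → ∃ x ∈ S, ∀ u ∈ S, w u ≤ w x := by
    intro S hS
    have hne : S.Nonempty := by
      obtain ⟨v⟩ := (inferInstance : Nonempty V)
      have h1 := hS.2 {v} (Set.pairwise_singleton _ _)
      rw [Set.ncard_singleton] at h1
      exact Set.nonempty_of_ncard_ne_zero (by omega)
    exact Set.exists_max_image S w (Set.toFinite S) hne
  have huniq : ∀ S S' : Set V, G.IsMaximumIndep S → G.IsMaximumIndep S' →
      G.IsIndep (S ∪ S') → S = S' := by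
    intro S S' hS hS' h
    have e1 : S = S ∪ S' :=
      Set.eq_of_subset_of_ncard_le Set.subset_union_left (hS.2 _ h) (Set.toFinite _)
    have e2 : S' = S ∪ S' :=
      Set.eq_of_subset_of_ncard_le Set.subset_union_right (hS'.2 _ h) (Set.toFinite _)
    exact e1.trans e2.symm
  have key : ∀ (S S' : Set V) (x y : V), G.IsMaximumIndep S → G.IsMaximumIndep S' →
      x ∈ S → (∀ u ∈ S, w u ≤ w x) → y ∈ S' → (∀ u ∈ S', w u ≤ w y) →
      ¬ G.Adj x y → w x ≤ w y → S = S' := by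
    intro S S' x y hS hS' hx hxm hy hym hn hxy
    apply huniq S S' hS hS'
    have half : ∀ v ∈ S', v ≠ y → w v + w v ≤ T := by
      intro v hv hvy
      have h1 := (hadj v y hvy).2 (hS'.1 hv hy hvy)
      have h2 := hym v hv
      linarith
    have cross : ∀ u ∈ S, ∀ v ∈ S', u ≠ v → ¬ G.Adj u v := by
      intro u hu v hv huv
      by_cases hxy' : x = y
      · by_cases hvy : v = y
        · exact hS.1 hu (by rw [hvy, ← hxy']; exact hx) huv
        by_cases hux : u = x
        · exact hS'.1 (by rw [hux, hxy']; exact hy) hv huv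
        have h1 := (hadj u x hux).2 (hS.1 hu hx hux)
        have h2 := hxm u hu
        have h3 := half v hv hvy
        rw [← hadj u v huv]
        linarith
      · have h0 := (hadj x y hxy').2 hn
        have h2 := hxm u hu
        rw [← hadj u v huv]
        by_cases hvy : v = y
        · rw [hvy]; linarith
        · have h3 := half v hv hvy
          linarith
    intro a ha b hb hab
    rcases ha with ha | ha <;> rcases hb with hb | hb
    · exact hS.1 ha hb hab
    · exact cross a ha b hb hab
    · exact fun h => cross b hb a ha hab.symm h.symm
    · exact hS'.1 ha hb hab
  have key2 : ∀ (S S' : Set V) (x y : V), G.IsMaximumIndep S → G.IsMaximumIndep S' →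
      x ∈ S → (∀ u ∈ S, w u ≤ w x) → y ∈ S' → (∀ u ∈ S', w u ≤ w y) →
      ¬ G.Adj x y → S = S' := by
    intro S S' x y hS hS' hx hxm hy hym hn
    rcases le_total (w x) (w y) with h | h
    · exact key S S' x y hS hS' hx hxm hy hym hn h
    · exact (key S' S y x hS' hS hy hym hx hxm (fun h' => hn h'.symm) h).symm
  choose! f hf hfm using hmax
  have hinj : Set.InjOn f {S : Set V | G.IsMaximumIndep S} := by
    intro S hS S' hS' he
    exact key2 S S' (f S) (f S') hS hS' (hf S hS) (hfm S hS) (hf S' hS') (hfm S' hS')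
      (by rw [he]; exact G.loopless.irrefl _)
  rw [← Set.ncard_image_of_injOn hinj, Set.ncard_eq_toFinset_card']
  apply SimpleGraph.IsClique.card_le_cliqueNum
  rw [Set.coe_toFinset]
  rintro _ ⟨S, hS, rfl⟩ _ ⟨S', hS', rfl⟩ hne
  by_contra hn
  exact hne (congrArg f (key2 S S' (f S) (f S') hS hS' (hf S hS) (hfm S hS) (hf S' hS')
    (hfm S' hS') hn))
end

section
/- If a d-dimensional knapsack instance I (items A, nonnegative real sizes s_{i,j}, nonnegative real capacities c_1,…,c_d) has an equivalent simple graph, then I satisfies property P_d(I): for every subset A' of A, if for every dimension i and all distinct j, j' in A' one has s_{i,j} + s_{i,j'} ≤ c_i, then for every dimension i the total size ∑_{j∈A'} s_{i,j} is at most c_i. -/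
/-- if a `d`-dimensional knapsack instance has an equivalent
simple graph, then it satisfies property `P_d(I)`. -/
theorem multidim_knapsack_equivalent_graph_implies_propertyPd
    {ι : Type} [Fintype ι] {d : ℕ} (hd : 0 < d)
    (s : Fin d → ι → ℝ) (c : Fin d → ℝ)
    (hs : ∀ i j, 0 ≤ s i j) (hc : ∀ i, 0 ≤ c i)
    (hequiv : ∃ (W : Type) (G : SimpleGraph W) (f : ι ≃ W),
      ∀ A' : Finset ι,
        ((∀ i : Fin d, (∑ j ∈ A', s i j) ≤ c i) ↔ G.IsIndep (f '' (↑A' : Set ι)))) :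
    ∀ A' : Finset ι,
      (∀ i : Fin d, ∀ j ∈ A', ∀ j' ∈ A', j ≠ j' → s i j + s i j' ≤ c i) →
      (∀ i : Fin d, (∑ j ∈ A', s i j) ≤ c i) := by
  classical
  obtain ⟨W, G, f, h⟩ := hequiv
  intro A' hA
  rw [h A']
  rintro _ ⟨a, ha, rfl⟩ _ ⟨b, hb, rfl⟩ hne
  have hab : a ≠ b := fun e => hne (by rw [e])
  have h2 := (h {a, b}).1 (fun i => by
    rw [Finset.sum_pair hab]
    exact hA i a ha b hb hab)
  exact h2 ⟨a, by simp, rfl⟩ ⟨b, by simp, rfl⟩ hne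
end

section
/- Let G = (V,E) be a finite simple graph with at least one vertex whose edge set is the union E = E_1 ∪ … ∪ E_k of the edge sets of threshold graphs G_1 = (V,E_1), …, G_k = (V,E_k). Then the number of maximal independent sets of G is at most the product ω(G_1)·ω(G_2)···ω(G_k) of the clique numbers of the covering threshold graphs. -/
theorem threshold_numMaximalIndep_le {V : Type} [Fintype V] [Nonempty V] (G : SimpleGraph V)
    (hG : G.IsThreshold) : numMaximalIndep G ≤ G.cliqueNum := by
  classical
  obtain ⟨w, T, hw, hT, h⟩ := hG
  have adj : ∀ u v, u ≠ v → (G.Adj u v ↔ T < w u + w v) := by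
    intro u v huv
    have := h {u, v}
    rw [Finset.sum_pair huv] at this
    rw [← not_le, this]
    simp [SimpleGraph.IsIndep, Set.pairwise_pair, huv, G.adj_comm v u]
  have ex : ∀ S : Set V, ∃ m, Maximal G.IsIndep S → m ∈ S ∧ ∀ u ∈ S, w u ≤ w m := by
    intro S
    by_cases hS : Maximal G.IsIndep S
    · have hne : S.Nonempty := by
        by_contra hne
        rw [Set.not_nonempty_iff_eq_empty] at hne
        obtain ⟨v⟩ := ‹Nonempty V›
        have h1 : G.IsIndep {v} := by simp [SimpleGraph.IsIndep]
        have h2 := hS.2 h1 (by simp [hne])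
        have : v ∈ S := h2 rfl
        simp [hne] at this
      obtain ⟨m, hm, hm'⟩ := Set.exists_max_image S w S.toFinite hne
      exact ⟨m, fun _ => ⟨hm, hm'⟩⟩
    · exact ⟨Classical.arbitrary V, fun h => absurd h hS⟩
  choose m hm using ex
  have hF : ∀ x, G.IsIndep {u | w u ≤ w x ∧ ¬ G.Adj u x} := by
    intro x u hu v hv huv hadj
    by_cases hvx : v = x
    · subst hvx; exact hu.2 hadj
    · apply hv.2
      rw [adj v x hvx]
      rw [adj u v huv] at hadj
      linarith [hu.1]
  have sub : ∀ S, Maximal G.IsIndep S → S = {u | w u ≤ w (m S) ∧ ¬ G.Adj u (m S)} := by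
    intro S hS
    refine hS.eq_of_subset (hF _) ?_
    intro u hu
    refine ⟨(hm S hS).2 u hu, fun hadj => hS.1 hu (hm S hS).1 hadj.ne hadj⟩
  have key : ∀ S S', Maximal G.IsIndep S → Maximal G.IsIndep S' → w (m S) ≤ w (m S') →
      ¬ G.Adj (m S) (m S') → S = S' := by
    intro S S' hS hS' hle hna
    rw [sub S' hS']
    refine hS.eq_of_subset (hF _) ?_
    intro u hu
    have hum := (hm S hS).2 u hu
    refine ⟨hum.trans hle, fun hadj => ?_⟩
    by_cases he : m S = m S'
    · rw [← he] at hadj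
      exact hS.1 hu (hm S hS).1 hadj.ne hadj
    · apply hna
      rw [adj _ _ he]
      rw [adj _ _ hadj.ne] at hadj
      linarith
  have inj : Set.InjOn m {S : Set V | Maximal G.IsIndep S} := by
    intro S hS S' hS' he
    exact key S S' hS hS' (by rw [he]) (by rw [he]; exact G.irrefl)
  unfold numMaximalIndep
  rw [← Set.ncard_image_of_injOn inj, Set.ncard_eq_toFinset_card']
  apply SimpleGraph.IsClique.card_le_cliqueNum
  rw [Set.coe_toFinset]
  rintro _ ⟨S, hS, rfl⟩ _ ⟨S', hS', rfl⟩ hne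
  by_contra hna
  apply hne
  rcases le_total (w (m S)) (w (m S')) with hle | hle
  · rw [key S S' hS hS' hle hna]
  · rw [key S' S hS' hS hle (fun h => hna h.symm)]

/-- if the edge set of `G` (with at least one vertex) is the union
of the edge sets of threshold graphs `G_1, …, G_k`, then `G` has at most
`ω(G_1)⋯ω(G_k)` maximal independent sets. -/
theorem numMaximalIndep_le_prod_cliqueNum_of_threshold_cover
    {V : Type} [Fintype V] [Nonempty V] {k : ℕ} (hk : 0 < k)
    (G : SimpleGraph V) (Gs : Fin k → SimpleGraph V)
    (hth : ∀ i, (Gs i).IsThreshold)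
    (hcover : G = ⨆ i, Gs i) :
    numMaximalIndep G ≤ ∏ i, (Gs i).cliqueNum := by
  classical
  refine le_trans ?_ (Finset.prod_le_prod' fun i _ => threshold_numMaximalIndep_le (Gs i) (hth i))
  have ext : ∀ (S : Set V) (i : Fin k), ∃ R : Set V, G.IsIndep S →
      S ⊆ R ∧ Maximal (Gs i).IsIndep R := by
    intro S i
    by_cases hS : G.IsIndep S
    · have : (Gs i).IsIndep S := by
        intro u hu v hv huv hadj
        apply hS hu hv huv
        rw [hcover, SimpleGraph.iSup_adj]
        exact ⟨i, hadj⟩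
      obtain ⟨R, h1, h2⟩ := (Set.toFinite {R : Set V | (Gs i).IsIndep R}).exists_le_maximal this
      exact ⟨R, fun _ => ⟨h1, h2⟩⟩
    · exact ⟨∅, fun h => absurd h hS⟩
  choose R hR using ext
  have eqI : ∀ S, Maximal G.IsIndep S → S = ⋂ i, R S i := by
    intro S hS
    refine hS.eq_of_subset ?_ (Set.subset_iInter fun i => (hR S i hS.1).1)
    intro u hu v hv huv hadj
    rw [hcover, SimpleGraph.iSup_adj] at hadj
    obtain ⟨i, hi⟩ := hadj
    exact (hR S i hS.1).2.1 (Set.mem_iInter.1 hu i) (Set.mem_iInter.1 hv i) huv hi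
  have hcard : ∏ i, numMaximalIndep (Gs i) =
      (Fintype.piFinset fun i => {S : Set V | Maximal (Gs i).IsIndep S}.toFinset).card := by
    rw [Fintype.card_piFinset]
    refine Finset.prod_congr rfl fun i _ => ?_
    unfold numMaximalIndep
    rw [Set.ncard_eq_toFinset_card']
  rw [hcard]
  unfold numMaximalIndep
  rw [Set.ncard_eq_toFinset_card']
  refine Finset.card_le_card_of_injOn R ?_ ?_
  · intro S hS
    have hS : Maximal G.IsIndep S := by simpa using hS
    simp only [Finset.mem_coe, Fintype.mem_piFinset, Set.mem_toFinset, Set.mem_setOf_eq]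
    exact fun i => (hR S i hS.1).2
  · intro S hS S' hS' he
    have hS : Maximal G.IsIndep S := by simpa using hS
    have hS' : Maximal G.IsIndep S' := by simpa using hS'
    rw [eqI S hS, eqI S' hS', he]
end

section
/- Let G = (V,E) be a finite simple graph with at least one vertex whose maximum vertex degree is at most d and whose edge set is the union E = E_1 ∪ … ∪ E_k of the edge sets of threshold graphs G_1 = (V,E_1), …, G_k = (V,E_k). Then the number of maximal independent sets of G is at most (d+1)^k. -/
open Classical in
theorem aux_family {V : Type} [Fintype V] [Nonempty V]
    (G H : SimpleGraph V) (hH : H.IsThreshold) (hle : H ≤ G) (d : ℕ)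
    (hdeg : ∀ v, (Finset.univ.filter (fun u => G.Adj v u)).card ≤ d)
    (hmax : ∀ S, Maximal G.IsIndep S → ∀ x, x ∉ S → ∃ y ∈ S, G.Adj x y) :
    ∃ F : Finset (Set V), F.card ≤ d + 1 ∧
      ∀ S, Maximal G.IsIndep S → {x | ∃ u ∈ S, H.Adj u x} ∈ F := by
  obtain ⟨w, T, hw, hT, h⟩ := hH
  have hadj : ∀ u v, u ≠ v → (H.Adj u v ↔ T < w u + w v) := by
    intro u v huv
    have h1 := h {u, v}
    rw [Finset.sum_pair huv] at h1
    rw [← not_le, h1]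
    simp only [SimpleGraph.IsIndep, Finset.coe_insert, Finset.coe_singleton]
    rw [Set.pairwise_pair]
    have := H.adj_comm u v
    tauto
  obtain ⟨c, hc⟩ := Finite.exists_max w
  set N : V → Finset V := fun v => Finset.univ.filter (fun u => H.Adj v u) with hN
  have hiso : ∀ u x, u ≠ c → H.Adj u x → H.Adj c u := by
    intro u x huc hux
    have h1 := (hadj u x hux.ne).1 hux
    rw [hadj c u huc.symm]
    have := hc x
    linarith
  have hNG : N c ⊆ Finset.univ.filter (fun u => G.Adj c u) := by
    intro x hx
    simp only [hN, Finset.mem_filter, Finset.mem_univ, true_and] at hx ⊢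
    exact hle hx
  have hcard := (Finset.card_le_card hNG).trans (hdeg c)
  set F0 : Finset (Set V) := (insert c (N c)).image (fun v => {x | H.Adj v x}) with hF0
  have hF0c : F0.card ≤ (N c).card + 1 :=
    Finset.card_image_le.trans (Finset.card_insert_le _ _)
  -- heaviest vertex
  have key : ∀ S, Maximal G.IsIndep S → ∃ v ∈ S, {x | ∃ u ∈ S, H.Adj u x} = {x | H.Adj v x} := by
    intro S hS
    have hne : S.Nonempty := by
      by_contra hne
      rw [Set.not_nonempty_iff_eq_empty] at hne
      obtain ⟨y, hy, _⟩ := hmax S hS c (by simp [hne])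
      simp [hne] at hy
    obtain ⟨v, hv, hvm⟩ := Set.exists_max_image S w S.toFinite hne
    refine ⟨v, hv, ?_⟩
    ext x
    constructor
    · rintro ⟨u, hu, hux⟩
      have hxv : v ≠ x := by
        rintro rfl
        exact hS.prop hu hv hux.ne (hle hux)
      have h1 := (hadj u x hux.ne).1 hux
      have h2 := hvm u hu
      exact (hadj v x hxv).2 (by linarith)
    · intro hx
      exact ⟨v, hv, hx⟩
  have key2 : ∀ S, Maximal G.IsIndep S → {x | ∃ u ∈ S, H.Adj u x} ∈ F0 ∨
      ({x | ∃ u ∈ S, H.Adj u x} = ∅ ∧ c ∉ S) := by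
    intro S hS
    obtain ⟨v, hv, he⟩ := key S hS
    by_cases hvc : v ∈ insert c (N c)
    · left
      rw [he, hF0]
      exact Finset.mem_image_of_mem (fun v => {x | H.Adj v x}) hvc
    · have hem : {x | ∃ u ∈ S, H.Adj u x} = ∅ := by
        rw [he]
        ext x
        simp only [Set.mem_ofPred_eq, Set.mem_empty_iff_false, iff_false]
        intro hx
        simp only [hN, Finset.mem_insert, Finset.mem_filter, Finset.mem_univ, true_and,
          not_or] at hvc
        exact hvc.2 (hiso v x hvc.1 hx)
      by_cases hcS : c ∈ S
      · left
        have : {x | ∃ u ∈ S, H.Adj u x} = {x | H.Adj c x} := by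
          apply Set.Subset.antisymm
          · rw [hem]; exact Set.empty_subset _
          · intro x hx
            exact ⟨c, hcS, hx⟩
        rw [this, hF0]
        exact Finset.mem_image_of_mem (fun v => {x | H.Adj v x}) (Finset.mem_insert_self _ _)
      · exact Or.inr ⟨hem, hcS⟩
  by_cases hd : (N c).card < d
  · refine ⟨insert ∅ F0, (Finset.card_insert_le _ _).trans (by omega), ?_⟩
    intro S hS
    rcases key2 S hS with h1 | h1
    · exact Finset.mem_insert_of_mem h1
    · rw [h1.1]; exact Finset.mem_insert_self _ _
  · refine ⟨F0, by omega, ?_⟩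
    intro S hS
    rcases key2 S hS with h1 | ⟨h1, hcS⟩
    · exact h1
    · exfalso
      obtain ⟨y, hy, hcy⟩ := hmax S hS c hcS
      have heq := Finset.eq_of_subset_of_card_le hNG ((hdeg c).trans (by omega))
      have hy' : y ∈ N c := by
        rw [heq]; simpa using hcy
      have hcy' : H.Adj c y := by simpa [hN] using hy'
      have : c ∈ {x | ∃ u ∈ S, H.Adj u x} := ⟨y, hy, hcy'.symm⟩
      rw [h1] at this
      exact this

theorem aux_max {V : Type} (G : SimpleGraph V) (S : Set V) (hS : Maximal G.IsIndep S)
    (x : V) (hx : x ∉ S) : ∃ y ∈ S, G.Adj x y := by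
  by_contra hcon
  push Not at hcon
  apply hx
  refine hS.le_of_ge (y := insert x S) ?_ (Set.subset_insert _ _) (Set.mem_insert _ _)
  refine Set.Pairwise.insert hS.prop ?_
  intro b hb _
  exact ⟨hcon b hb, fun h => hcon b hb h.symm⟩

/-- if `G` (with at least one vertex) has maximum degree at most `d`
and its edge set is the union of the edge sets of `k` threshold graphs, then `G`
has at most `(d+1)^k` maximal independent sets. -/
theorem numMaximalIndep_le_pow_of_threshold_cover_max_degree
    {V : Type} [Fintype V] [Nonempty V] {k : ℕ} (hk : 0 < k)
    (G : SimpleGraph V) [DecidableRel G.Adj]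
    (Gs : Fin k → SimpleGraph V)
    (hth : ∀ i, (Gs i).IsThreshold)
    (hcover : G = ⨆ i, Gs i)
    (d : ℕ) (hdeg : ∀ v, G.degree v ≤ d) :
    numMaximalIndep G ≤ (d + 1) ^ k := by
  classical
  have hmax := aux_max G
  have hF := fun i => aux_family G (Gs i) (hth i) (hcover ▸ le_iSup Gs i) d
    (fun v => by
      have := hdeg v
      rw [← SimpleGraph.card_neighborFinset_eq_degree, SimpleGraph.neighborFinset_eq_filter] at this
      convert this) hmax
  choose F hFc hFm using hF
  have hle : numMaximalIndep G ≤ ((Fintype.piFinset F : Finset (Fin k → Set V)) : Set (Fin k → Set V)).ncard := by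
    apply Set.ncard_le_ncard_of_injOn (fun S i => {x | ∃ u ∈ S, (Gs i).Adj u x})
    · intro S hS
      simp only [Finset.mem_coe, Fintype.mem_piFinset]
      exact fun i => hFm i S hS
    · have hsub : ∀ S S' : Set V, Maximal G.IsIndep S → Maximal G.IsIndep S' →
          (fun i : Fin k => {x | ∃ u ∈ S, (Gs i).Adj u x}) =
            (fun i => {x | ∃ u ∈ S', (Gs i).Adj u x}) → S ⊆ S' := by
        intro S S' hS hS' he x hx
        by_contra hx'
        obtain ⟨y, hy, hxy⟩ := hmax S' hS' x hx'
        have hxy2 := hxy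
        rw [hcover, SimpleGraph.iSup_adj] at hxy2
        obtain ⟨i, hi⟩ := hxy2
        have h1 : x ∈ {x | ∃ u ∈ S', (Gs i).Adj u x} := ⟨y, hy, hi.symm⟩
        rw [← congrFun he i] at h1
        obtain ⟨u, hu, hux⟩ := h1
        refine hS.prop hu hx hux.ne ?_
        rw [hcover, SimpleGraph.iSup_adj]
        exact ⟨i, hux⟩
      intro S hS S' hS' he
      exact Set.Subset.antisymm (hsub S S' hS hS' he) (hsub S' S hS' hS he.symm)
  rw [Set.ncard_coe_finset, Fintype.card_piFinset] at hle
  refine hle.trans ((Finset.prod_le_pow_card _ _ (d + 1) (fun i _ => hFc i)).trans ?_)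
  simp
end
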